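/- Let k ≥ 2 and 2 ≤ ℓ ≤ k be integers, let u be a real number with |u| < 1/2, and let z > |u|. Then ∫₀^∞ e^{−Lz} · Ĩ_{k,ℓ}(u,L) dL = 2^{1−k} · (z+u)^{1−ℓ} · z^{ℓ−k−1} · Γ(1+2u) · Γ(1−2u), where Γ denotes the Gamma function. -/

import Mathlib

open Real MeasureTheory

/-- `I_{k,ℓ}(u,L)`: the integral of `exp(2u(v₁+⋯+v_{ℓ−1}))` over the open simplex
`{v ∈ ℝ^{k−1} : vᵢ > 0, v₁+⋯+v_{k−1} < L/2}` (coordinates are 0-indexed: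
`v i` is `v_{i+1}`). -/
noncomputable def Ikl (k l : ℕ) (u L : ℝ) : ℝ :=
  ∫ v in {v : Fin (k-1) → ℝ | (∀ i, 0 < v i) ∧ ∑ i, v i < L/2},
    Real.exp (2 * u * ∑ i ∈ Finset.univ.filter (fun i : Fin (k-1) => i.val < l - 1), v i)

/-- The `j`-th (1-indexed) coordinate `w_j` for `1 ≤ j ≤ k−1`, with the convention
`w_k = L/2 − (w₁+⋯+w_{k−1})`. -/
noncomputable def wcoord (k : ℕ) (L : ℝ) (w : Fin (k-1) → ℝ) (j : ℕ) : ℝ :=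
  if h : j - 1 < k - 1 then w ⟨j - 1, h⟩ else L/2 - ∑ i, w i

/-- `Ĩ_{k,ℓ}(u,L)`: the integral of
`exp(−2u(w₂+⋯+w_ℓ))·(1−e^{−w_ℓ})^{−2u}·(1−e^{−w₁})^{2u}` over the open simplex
`{w ∈ ℝ^{k−1} : wᵢ > 0, w₁+⋯+w_{k−1} < L/2}`, where `w_k = L/2 − (w₁+⋯+w_{k−1})`. -/
noncomputable def Itkl (k l : ℕ) (u L : ℝ) : ℝ :=
  ∫ w in {w : Fin (k-1) → ℝ | (∀ i, 0 < w i) ∧ ∑ i, w i < L/2},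
    Real.exp (-(2*u) * ∑ j ∈ Finset.Icc 2 l, wcoord k L w j)
      * (1 - Real.exp (-(wcoord k L w l))) ^ (-(2*u))
      * (1 - Real.exp (-(wcoord k L w 1))) ^ (2*u)


lemma beta_real_aux (α β : ℝ) (hα : 0 < α) (hβ : 0 < β) :
    ∫ x in Set.Ioo (0:ℝ) 1, x ^ (α - 1) * (1 - x) ^ (β - 1) = ProbabilityTheory.beta α β := by
  rw [ProbabilityTheory.beta_eq_betaIntegralReal α β hα hβ,
      Complex.betaIntegral, intervalIntegral.integral_of_le (by norm_num),
      ← integral_Ioc_eq_integral_Ioo, ← RCLike.re_to_complex, ← integral_re]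
  · refine setIntegral_congr_fun measurableSet_Ioc fun x ⟨hx1, hx₂⟩ ↦ ?_
    norm_cast
    rw [← Complex.ofReal_cpow, ← Complex.ofReal_cpow, RCLike.re_to_complex,
      Complex.re_mul_ofReal, Complex.ofReal_re]
    all_goals linarith
  · have h := Complex.betaIntegral_convergent (u := α) (v := β) (by simpa) (by simpa)
    rw [intervalIntegrable_iff_integrableOn_Ioc_of_le (by norm_num)] at h
    exact h

/-- one-dimensional factor -/
noncomputable def fac (a d : ℝ) : ℝ → ℝ :=
  Set.indicator (Set.Ioi (0:ℝ)) (fun x => Real.exp (-(a * x)) * (1 - Real.exp (-x)) ^ d)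

lemma fac_integral (a d : ℝ) (ha : 0 < a) (hd : 0 < 1 + d) :
    ∫ x, fac a d x = ProbabilityTheory.beta a (1 + d) := by
  unfold fac
  rw [integral_indicator measurableSet_Ioi, ← beta_real_aux a (1 + d) ha hd]
  have him : (fun x : ℝ => Real.exp (-x)) '' Set.Ioi 0 = Set.Ioo 0 1 := by
    ext y
    constructor
    · rintro ⟨x, hx, rfl⟩
      simp only [Set.mem_Ioi] at hx
      exact ⟨Real.exp_pos _, by simpa using hx⟩
    · rintro ⟨h0, h1⟩
      refine ⟨-Real.log y, ?_, ?_⟩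
      · simpa using Real.log_neg h0 h1
      · simp [Real.exp_log h0]
  rw [← him, integral_image_eq_integral_abs_deriv_smul (f' := fun x => -Real.exp (-x))
    measurableSet_Ioi]
  · refine setIntegral_congr_fun measurableSet_Ioi fun x hx ↦ ?_
    simp only [abs_neg, Real.abs_exp, smul_eq_mul]
    rw [← Real.exp_mul, ← mul_assoc, ← Real.exp_add]
    congr 2
    · ring
    · ring
  · intro x _
    have := (hasDerivAt_neg x).exp
    simpa using this.hasDerivWithinAt
  · intro x _ y _ h
    simpa using h

lemma fac_integrable (a d : ℝ) (ha : 0 < a) (hd : 0 < 1 + d) : Integrable (fac a d) := by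
  by_contra h
  have h1 := fac_integral a d ha hd
  rw [integral_undef h] at h1
  exact (ProbabilityTheory.beta_pos ha hd).ne h1

lemma conv_aux (n : ℕ) (f : Fin n → ℝ → ℝ) (g : ℝ → ℝ) (hf : ∀ i, Integrable (f i))
    (hg : Integrable g) :
    ∫ t : ℝ, ∫ w : Fin n → ℝ, (∏ i, f i (w i)) * g (t - ∑ i, w i)
      = (∏ i, ∫ x, f i x) * ∫ x, g x := by
  have hP : Integrable (fun w : Fin n → ℝ => ∏ i, f i (w i)) :=
    Integrable.fintype_prod hf
  have hmp : MeasurePreserving (fun p : (Fin n → ℝ) × ℝ => (id p.1, p.2 - ∑ i, p.1 i))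
      ((volume : Measure (Fin n → ℝ)).prod (volume : Measure ℝ))
      ((volume : Measure (Fin n → ℝ)).prod (volume : Measure ℝ)) := by
    refine MeasurePreserving.skew_product (g := fun (w : Fin n → ℝ) (t : ℝ) => t - ∑ i, w i)
      (MeasurePreserving.id _) ?_ ?_
    · unfold Function.uncurry
      fun_prop
    · exact Filter.Eventually.of_forall fun w => map_sub_right_eq_self _ _
  have hint : Integrable (fun p : (Fin n → ℝ) × ℝ => (∏ i, f i (p.1 i)) * g (p.2 - ∑ i, p.1 i))
      ((volume : Measure (Fin n → ℝ)).prod (volume : Measure ℝ)) :=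
    hmp.integrable_comp_of_integrable (hP.mul_prod hg)
  rw [← integral_integral_swap (f := fun (w : Fin n → ℝ) (t : ℝ) =>
    (∏ i, f i (w i)) * g (t - ∑ i, w i)) hint]
  simp_rw [integral_const_mul, integral_sub_right_eq_self]
  rw [integral_mul_const, integral_fintype_prod_volume_eq_prod]

/-- rates -/
noncomputable def ra (m : ℕ) (u z : ℝ) (i : ℕ) : ℝ :=
  2 * z + if i ∈ Finset.Icc 1 m then 2 * u else 0

/-- exponents -/
noncomputable def de (m : ℕ) (u : ℝ) (i : ℕ) : ℝ :=
  (if i = m then -(2*u) else 0) + if i = 0 then 2 * u else 0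

lemma const_aux (n m : ℕ) (hm : 1 ≤ m) (hmn : m ≤ n) (u z : ℝ) (hu : |u| < 1/2) (hz : |u| < z) :
    ∏ i ∈ Finset.range (n+1), ProbabilityTheory.beta (ra m u z i) (1 + de m u i)
      = (2 * z)⁻¹ ^ (n+1) * (2 * z / (2 * z + 2 * u)) ^ m
        * (Real.Gamma (1 + 2*u) * Real.Gamma (1 - 2*u)) := by
  have hz0 : 0 < z := (abs_nonneg u).trans_lt hz
  have h1 := neg_abs_le u
  have h2 := le_abs_self u
  have hA : 0 < 2 * z + 2 * u := by linarith
  have hB : 0 < 2 * z := by linarith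
  have hc : ∀ i, ProbabilityTheory.beta (ra m u z i) (1 + de m u i)
      = (2 * z)⁻¹ * (if i ∈ Finset.Icc 1 m then 2 * z / (2 * z + 2 * u) else 1)
        * (if i = 0 then ProbabilityTheory.beta (2*z) (1 + 2*u) * (2 * z) else 1)
        * (if i = m then ProbabilityTheory.beta (2*z+2*u) (1 - 2*u) * (2 * z + 2 * u) else 1) := by
    have hb1 : ∀ a : ℝ, 0 < a → ProbabilityTheory.beta a 1 = a⁻¹ := by
      intro a ha
      have := (Real.Gamma_pos_of_pos ha).ne'
      rw [ProbabilityTheory.beta, Real.Gamma_add_one ha.ne', Real.Gamma_one]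
      field_simp
    intro i
    by_cases i0 : i = 0
    · subst i0
      have : (0:ℕ) ≠ m := by omega
      simp [ra, de, this]
      field_simp
    by_cases im : i = m
    · subst im
      have hA' : z + u ≠ 0 := by intro h; linarith
      simp [ra, de, hm, i0, ← sub_eq_add_neg]
      field_simp
    · simp only [ra, de, i0, im, if_false, add_zero, mul_one]
      split_ifs with h
      · rw [hb1 _ hA]; field_simp
      · rw [add_zero, hb1 _ hB]; field_simp
  simp_rw [hc, Finset.prod_mul_distrib, Finset.prod_ite_eq', Finset.prod_ite_mem]
  have hinter : Finset.range (n+1) ∩ Finset.Icc 1 m = Finset.Icc 1 m := by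
    apply Finset.inter_eq_right.2
    intro i hi
    simp at hi ⊢
    omega
  rw [hinter]
  simp only [Finset.prod_const, Finset.card_range, Nat.card_Icc, Nat.add_sub_cancel,
    Finset.mem_range, Nat.succ_pos, if_true, show m < n + 1 by omega]
  rw [mul_assoc]
  congr 1
  unfold ProbabilityTheory.beta
  rw [show 2 * z + (1 + 2 * u) = (2 * z + 2 * u) + 1 by ring,
    show 2 * z + 2 * u + (1 - 2 * u) = 2 * z + 1 by ring,
    Real.Gamma_add_one hA.ne', Real.Gamma_add_one hB.ne']
  have g1 := (Real.Gamma_pos_of_pos hA).ne'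
  have g2 := (Real.Gamma_pos_of_pos hB).ne'
  have hA' := hA.ne'
  generalize 2 * z + 2 * u = A at *
  field_simp

lemma point_aux (n m : ℕ) (hm : 1 ≤ m) (hmn : m ≤ n) (u z t : ℝ) (w : Fin n → ℝ) :
    Real.exp (-(2 * t * z)) *
      Set.indicator {w : Fin n → ℝ | (∀ i, 0 < w i) ∧ ∑ i, w i < t}
      (fun w => Real.exp (-(2*u) * ∑ j ∈ Finset.Icc 2 (m+1), wcoord (n+1) (2 * t) w j)
      * (1 - Real.exp (-(wcoord (n+1) (2 * t) w (m+1)))) ^ (-(2*u))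
      * (1 - Real.exp (-(wcoord (n+1) (2 * t) w 1))) ^ (2*u)) w
     = (∏ i : Fin n, fac (ra m u z i) (de m u i) (w i))
        * fac (ra m u z n) (de m u n) (t - ∑ i, w i) := by
  by_cases hw : w ∈ {w : Fin n → ℝ | (∀ i, 0 < w i) ∧ ∑ i, w i < t}
  · rw [Set.indicator_of_mem hw]
    obtain ⟨h0, h1⟩ := hw
    let W : ℕ → ℝ := fun i => wcoord (n+1) (2 * t) w (i+1)
    have hWi : ∀ i : Fin n, W i = w i := by
      intro i
      simp [W, wcoord]
    have hWn : W n = t - ∑ i, w i := by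
      simp [W, wcoord]
    have hsum : ∑ i ∈ Finset.range (n+1), W i = t := by
      rw [Finset.sum_range_succ, Finset.sum_range, hWn]
      simp [hWi]
    have hpos : ∀ i ∈ Finset.range (n+1), 0 < W i := by
      intro i hi
      rcases Nat.lt_or_ge i n with h | h
      · rw [hWi ⟨i, h⟩]; exact h0 _
      · have : i = n := by simp at hi; omega
        rw [this, hWn]; linarith
    have hrhs : (∏ i : Fin n, fac (ra m u z i) (de m u i) (w i))
        * fac (ra m u z n) (de m u n) (t - ∑ i, w i)
        = ∏ i ∈ Finset.range (n+1), fac (ra m u z i) (de m u i) (W i) := by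
      rw [Finset.prod_range_succ, Finset.prod_range, hWn]
      simp [hWi]
    rw [hrhs]
    have hinter : Finset.range (n+1) ∩ Finset.Icc 1 m = Finset.Icc 1 m := by
      apply Finset.inter_eq_right.2
      intro i hi
      simp at hi ⊢
      omega
    have hf : ∀ i ∈ Finset.range (n+1), fac (ra m u z i) (de m u i) (W i)
        = Real.exp (-(2*z) * W i + (-(2*u)) * if i ∈ Finset.Icc 1 m then W i else 0)
          * (if i = m then (1 - Real.exp (-W i)) ^ (-(2*u)) else 1)
          * (if i = 0 then (1 - Real.exp (-W i)) ^ (2*u) else 1) := by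
      intro i hi
      have hp := hpos i hi
      have hb : 0 < 1 - Real.exp (-W i) := by
        have : Real.exp (-W i) < 1 := by simpa using hp
        linarith
      rw [fac, Set.indicator_of_mem (by exact hp), mul_assoc]
      congr 1
      · congr 1
        unfold ra
        split_ifs <;> ring
      · rw [de, Real.rpow_add hb]
        congr 1
        · split_ifs <;> simp
        · split_ifs <;> simp
    rw [Finset.prod_congr rfl hf]
    simp_rw [Finset.prod_mul_distrib, Finset.prod_ite_eq', ← Real.exp_sum, Finset.sum_add_distrib,
      ← Finset.mul_sum, Finset.sum_ite_mem, hinter, hsum]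
    have hre : ∑ j ∈ Finset.Icc 2 (m+1), wcoord (n+1) (2 * t) w j = ∑ i ∈ Finset.Icc 1 m, W i := by
      rw [← Finset.sum_image (f := fun j => wcoord (n+1) (2 * t) w j) (g := fun i : ℕ => i + 1)
        (s := Finset.Icc 1 m) (by intro a _ b _ h; simpa using h)]
      congr 1
      ext j
      simp only [Finset.mem_image, Finset.mem_Icc]
      constructor
      · rintro ⟨h, h'⟩
        exact ⟨j - 1, by omega, by omega⟩
      · rintro ⟨a, h, h'⟩
        omega
    rw [hre]
    simp only [Finset.mem_range, Nat.succ_pos, if_true, show m < n + 1 by omega]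
    rw [Real.exp_add, show -(2 * t * z) = -(2*z) * t by ring]
    simp only [W, zero_add]
    ring
  · rw [Set.indicator_of_notMem hw, mul_zero]
    symm
    by_cases h : ∀ i, 0 < w i
    · have h' : ¬ (∑ i, w i < t) := fun h' => hw ⟨h, h'⟩
      rw [fac, Set.indicator_of_notMem, mul_zero]
      simp only [Set.mem_Ioi]; linarith
    · push Not at h
      obtain ⟨i, hi⟩ := h
      rw [Finset.prod_eq_zero (Finset.mem_univ i), zero_mul]
      rw [fac, Set.indicator_of_notMem]
      simpa using hi

/-- **Laplace transform of `Ĩ_{k,ℓ}` (proof of Proposition 5.2).** For `2 ≤ ℓ ≤ k`,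
`|u| < 1/2` and `z > |u|`,
`∫₀^∞ e^{−Lz} Ĩ_{k,ℓ}(u,L) dL = 2^{1−k}(z+u)^{1−ℓ} z^{ℓ−k−1} Γ(1+2u)Γ(1−2u)`. -/
theorem stmt_5 (k l : ℕ) (hk : 2 ≤ k) (hl2 : 2 ≤ l) (hlk : l ≤ k)
    (u z : ℝ) (hu : |u| < 1/2) (hz : |u| < z) :
    ∫ L in Set.Ioi (0:ℝ), Real.exp (-(L*z)) * Itkl k l u L
      = (2:ℝ)^(1 - (k:ℤ)) * (z + u)^(1 - (l:ℤ)) * z^((l:ℤ) - k - 1)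
        * Real.Gamma (1 + 2*u) * Real.Gamma (1 - 2*u) := by
  obtain ⟨n, rfl⟩ : ∃ n, k = n + 1 := ⟨k - 1, by omega⟩
  obtain ⟨m, rfl⟩ : ∃ m, l = m + 1 := ⟨l - 1, by omega⟩
  have hm : 1 ≤ m := by omega
  have hmn : m ≤ n := by omega
  have hz0 : 0 < z := (abs_nonneg u).trans_lt hz
  have h1 := neg_abs_le u
  have h2 := le_abs_self u
  have hA : 0 < z + u := by linarith
  have hra : ∀ i, 0 < ra m u z i := by
    intro i; unfold ra; split_ifs <;> linarith
  have hde : ∀ i, 0 < 1 + de m u i := by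
    intro i; unfold de; split_ifs <;> linarith
  have hS : ∀ t : ℝ, MeasurableSet {w : Fin n → ℝ | (∀ i, 0 < w i) ∧ ∑ i, w i < t} := by
    intro t
    rw [show {w : Fin n → ℝ | (∀ i, 0 < w i) ∧ ∑ i, w i < t}
      = (⋂ i, {w : Fin n → ℝ | 0 < w i}) ∩ {w : Fin n → ℝ | ∑ i, w i < t} by ext; simp]
    apply MeasurableSet.inter
    · exact MeasurableSet.iInter fun i => measurableSet_lt measurable_const (measurable_pi_apply i)
    · exact measurableSet_lt (by fun_prop) measurable_const
  have key : ∀ t : ℝ, Real.exp (-(2 * t * z)) * Itkl (n+1) (m+1) u (2 * t)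
      = ∫ w : Fin n → ℝ, (∏ i : Fin n, fac (ra m u z i) (de m u i) (w i))
        * fac (ra m u z n) (de m u n) (t - ∑ i, w i) := by
    intro t
    simp_rw [← point_aux n m hm hmn u z t]
    rw [integral_const_mul, integral_indicator (hS t), Itkl,
      show 2 * t / 2 = t by ring]
    rfl
  have hzero : ∀ t : ℝ, t ≤ 0 → Real.exp (-(2 * t * z)) * Itkl (n+1) (m+1) u (2 * t) = 0 := by
    intro t ht
    have hemp : {w : Fin (n+1-1) → ℝ | (∀ i, 0 < w i) ∧ ∑ i, w i < 2 * t / 2} = ∅ := by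
      ext w
      simp only [Set.mem_ofPred_eq, Set.mem_empty_iff_false, iff_false, not_and, not_lt]
      intro h
      have := Finset.sum_nonneg (s := Finset.univ) fun i _ => (h i).le
      linarith
    rw [Itkl, hemp]
    simp
  have hcv := integral_comp_mul_left_Ioi'
    (fun L => Real.exp (-(L*z)) * Itkl (n+1) (m+1) u L) 0 (b := 2) (by norm_num)
  rw [mul_zero] at hcv
  rw [← hcv, setIntegral_eq_integral_of_forall_compl_eq_zero
    (fun t ht => hzero t (by simpa using ht))]
  simp_rw [key]
  rw [conv_aux n _ _ (fun i => fac_integrable _ _ (hra i) (hde i))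
    (fac_integrable _ _ (hra n) (hde n))]
  simp_rw [fac_integral _ _ (hra _) (hde _)]
  have hc := const_aux n m hm hmn u z hu hz
  rw [Finset.prod_range_succ, Finset.prod_range] at hc
  rw [hc]
  have e1 : (1 - ((n+1 : ℕ) : ℤ)) = -(n:ℤ) := by push_cast; ring
  have e2 : (1 - ((m+1 : ℕ) : ℤ)) = -(m:ℤ) := by push_cast; ring
  have e3 : (((m+1 : ℕ) : ℤ) - ((n+1:ℕ):ℤ) - 1) = (m:ℤ) - (n:ℤ) - 1 := by push_cast; ring
  rw [e1, e2, e3, zpow_neg, zpow_neg, zpow_sub₀ hz0.ne', zpow_sub₀ hz0.ne']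
  simp only [zpow_natCast, zpow_one, smul_eq_mul]
  rw [show 2 * z / (2 * z + 2 * u) = z / (z + u) by field_simp, div_pow, inv_pow, mul_pow]
  field_simp
  try ring
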